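/- Let F be a field and let f(x_1,...,x_n) = a_1 x_1^k + ... + a_n x_n^k + g(x_1,...,x_n) be a polynomial over F, where k is a positive integer with n ≤ k, a_1,...,a_n are nonzero elements of F, and g is a polynomial of total degree less than k. Let A be a finite subset of F and write |A| = kq + r with q, r nonnegative integers and r < k. Then the restricted value set {f(x_1,...,x_n) : x_1,...,x_n ∈ A, and x_i ≠ x_j whenever i ≠ j} has cardinality at least min{p(F), n(q-1) + min{n, r} + 1}. -/

import Mathlib

/-- `p(F)`: the characteristic of `F` if positive, `+∞` if `F` has characteristic zero,
as an extended integer. -/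
noncomputable def fieldCharZ (F : Type*) [Field F] : WithTop ℤ :=
  if ringChar F = 0 then ⊤ else (ringChar F : WithTop ℤ)

/-!
Suppose the value set `T` were smaller than claimed. Put `P = ∏ c ∈ T, (f - c)` times the
Vandermonde polynomial; it vanishes on all of `A ^ n`. Its leading form is
`(∑ aᵢ xᵢ ^ k) ^ |T|` times the Vandermonde determinant. Since the exponents in the latter are
less than `n ≤ k`, reading exponents in base `k` shows that the coefficient of
`∏ xᵢ ^ (k mᵢ + i)` with `∑ mᵢ = |T|` is a multinomial coefficient times `∏ aᵢ ^ mᵢ`, which is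
nonzero because `|T| < p(F)`. If `|T|` does not exceed the sum of the admissible `mᵢ`, these
can be chosen with `k mᵢ + i < |A|`, against the Combinatorial Nullstellensatz.
-/

section LeadingForms

open MvPolynomial

variable {σ R : Type*}

theorem homogeneousComponent_add_mul [CommSemiring R] {P Q : MvPolynomial σ R} {d e : ℕ}
    (hP : P.totalDegree ≤ d) (hQ : Q.totalDegree ≤ e) :
    homogeneousComponent (d + e) (P * Q) =
      homogeneousComponent d P * homogeneousComponent e Q := by
  classical
  ext t
  rw [coeff_homogeneousComponent, coeff_mul, coeff_mul]
  split_ifs with ht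
  · refine Finset.sum_congr rfl fun ⟨u, v⟩ huv => ?_
    have hdeg : u.degree + v.degree = d + e := by
      rw [← map_add, Finset.HasAntidiagonal.mem_antidiagonal.1 huv, ht]
    simp only [coeff_homogeneousComponent]
    rcases lt_trichotomy u.degree d with hu | hu | hu
    · have hv : Q.totalDegree < v.degree := by omega
      simp [coeff_eq_zero_of_totalDegree_lt hv]
    · have hv : v.degree = e := by omega
      simp [hu, hv]
    · simp [coeff_eq_zero_of_totalDegree_lt (hP.trans_lt hu)]
  · refine (Finset.sum_eq_zero fun ⟨u, v⟩ huv => ?_).symm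
    have hdeg : ¬ (u.degree = d ∧ v.degree = e) := by
      rintro ⟨rfl, rfl⟩
      exact ht (by rw [← map_add, Finset.HasAntidiagonal.mem_antidiagonal.1 huv])
    simp only [coeff_homogeneousComponent]
    grind

theorem homogeneousComponent_prod [CommSemiring R] {ι : Type*} (s : Finset ι)
    {P : ι → MvPolynomial σ R} {d : ι → ℕ} (hP : ∀ i ∈ s, (P i).totalDegree ≤ d i) :
    homogeneousComponent (∑ i ∈ s, d i) (∏ i ∈ s, P i) =
      ∏ i ∈ s, homogeneousComponent (d i) (P i) := by
  induction s using Finset.cons_induction with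
  | empty => simp
  | cons i s hi ih =>
    rw [Finset.forall_mem_cons] at hP
    have hprod : (∏ j ∈ s, P j).totalDegree ≤ ∑ j ∈ s, d j :=
      (totalDegree_finsetProd s P).trans (Finset.sum_le_sum hP.2)
    rw [Finset.sum_cons, Finset.prod_cons, Finset.prod_cons,
      homogeneousComponent_add_mul hP.1 hprod, ih hP.2]

theorem homogeneousComponent_prod_sub_C [CommRing R] {f : MvPolynomial σ R} {k : ℕ} (hk : 0 < k)
    (hf : f.totalDegree ≤ k) (S : Finset R) :
    homogeneousComponent (S.card * k) (∏ c ∈ S, (f - C c)) =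
      homogeneousComponent k f ^ S.card := by
  have hcomp (c : R) : homogeneousComponent k (f - C c) = homogeneousComponent k f := by
    rw [map_sub, homogeneousComponent_eq_zero k (C c) (by simpa using hk), sub_zero]
  have hdeg (c : R) : (f - C c).totalDegree ≤ k := (totalDegree_sub_C_le f c).trans hf
  have hprod := homogeneousComponent_prod S (d := fun _ => k) fun c _ => hdeg c
  simpa only [hcomp, Finset.sum_const, smul_eq_mul, Finset.prod_const] using hprod

/-- The polynomial method of Alon, Nathanson and Ruzsa. -/
theorem exists_eval_ne_zero_and_eval_notMem [Finite σ] [CommRing R] [IsDomain R]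
    {f h : MvPolynomial σ R} {k e : ℕ} (hk : 0 < k) (hf : f.totalDegree ≤ k)
    (hh : h.totalDegree ≤ e) (S : Finset R) (A : σ → Finset R) {t : σ →₀ ℕ}
    (ht : t.degree = S.card * k + e) (htA : ∀ i, t i < (A i).card)
    (hcoeff : coeff t (homogeneousComponent k f ^ S.card * homogeneousComponent e h) ≠ 0) :
    ∃ x : σ → R, (∀ i, x i ∈ A i) ∧ eval x h ≠ 0 ∧ eval x f ∉ S := by
  have hprod : (∏ c ∈ S, (f - C c)).totalDegree ≤ S.card * k := by
    refine (totalDegree_finsetProd _ _).trans ?_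
    rw [← smul_eq_mul]
    exact Finset.sum_le_card_nsmul _ _ _ fun c _ => (totalDegree_sub_C_le f c).trans hf
  set P := (∏ c ∈ S, (f - C c)) * h with hP
  have hPt : coeff t P ≠ 0 := by
    rwa [← homogeneousComponent_prod_sub_C hk hf, ← homogeneousComponent_add_mul hprod hh,
      coeff_homogeneousComponent, if_pos ht] at hcoeff
  have hPdeg : P.totalDegree = t.degree :=
    le_antisymm (ht ▸ (totalDegree_mul _ _).trans (add_le_add hprod hh))
      (le_totalDegree (mem_support_iff.2 hPt))
  obtain ⟨x, hxA, hx⟩ := combinatorial_nullstellensatz_exists_eval_nonzero P t hPt hPdeg A htA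
  rw [hP, map_mul, map_prod] at hx
  refine ⟨x, hxA, right_ne_zero_of_mul hx, fun hxS => left_ne_zero_of_mul hx ?_⟩
  exact Finset.prod_eq_zero hxS (by simp)

end LeadingForms

section Expand

open MvPolynomial

variable {σ R : Type*} [CommSemiring R]

-- Reduction mod `k` recovers `e`, and then `m`, from `k • m + e`.
theorem coeff_expand_mul {k : ℕ} (hk : k ≠ 0) (P : MvPolynomial σ R) {Q : MvPolynomial σ R}
    (hQ : ∀ d ∈ Q.support, ∀ i, d i < k) (m : σ →₀ ℕ) {e : σ →₀ ℕ} (he : ∀ i, e i < k) :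
    coeff (k • m + e) (expand k P * Q) = coeff m P * coeff e Q := by
  classical
  rw [coeff_mul, Finset.sum_eq_single (k • m, e), coeff_expand_smul k hk]
  · rintro ⟨u, v⟩ huv hne
    contrapose! hne
    obtain ⟨w, -, rfl⟩ := Finset.mem_image.1
      (support_expand_subset P (mem_support_iff.2 (left_ne_zero_of_mul hne)))
    have hv := hQ v (mem_support_iff.2 (right_ne_zero_of_mul hne))
    have hsum : k • w + v = k • m + e := Finset.HasAntidiagonal.mem_antidiagonal.1 huv
    have hve : v = e := by
      ext i
      have hi : k * w i + v i = k * m i + e i := DFunLike.congr_fun hsum i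
      simpa [Nat.mul_add_mod, Nat.mod_eq_of_lt, hv i, he i] using congrArg (· % k) hi
    rw [hve] at hsum ⊢
    rw [add_right_cancel hsum]
  · simp

theorem coeff_sum_C_mul_X_pow_pow_mul [Fintype σ] {k : ℕ} (hk : k ≠ 0) (a : σ → R)
    {Q : MvPolynomial σ R} (hQ : ∀ d ∈ Q.support, ∀ i, d i < k) (m : σ →₀ ℕ) {e : σ →₀ ℕ}
    (he : ∀ i, e i < k) :
    coeff (k • m + e) ((∑ i, C (a i) * X i ^ k) ^ m.degree * Q) =
      m.multinomial * m.prod (fun i j => a i ^ j) * coeff e Q := by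
  have hexpand : (∑ i, C (a i) * X i ^ k) ^ m.degree =
      expand k ((∑ i, a i • X i : MvPolynomial σ R) ^ m.degree) := by
    simp [smul_eq_C_mul]
  have hsum : m.sum (fun _ j => j) = m.degree := m.degree_apply.symm
  rw [hexpand, coeff_expand_mul hk _ hQ m he, coeff_linearCombination_X_pow_of_fintype,
    if_pos hsum]

end Expand

section Vandermonde

open MvPolynomial

/-- The exponent vector `(0, 1, …, n - 1)` of the diagonal term of the Vandermonde determinant. -/
noncomputable def staircase (n : ℕ) : Fin n →₀ ℕ :=
  Finsupp.equivFunOnFinite.symm Fin.val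

@[simp]
theorem staircase_apply {n : ℕ} (i : Fin n) : staircase n i = i := rfl

/-- The Vandermonde determinant in the variables `X 0, …, X (n - 1)`, whose nonvanishing at a
point expresses that the coordinates are distinct. -/
noncomputable def vandermondePolynomial (R : Type*) [CommRing R] (n : ℕ) :
    MvPolynomial (Fin n) R :=
  (Matrix.vandermonde X).det

variable {R : Type*} [CommRing R] {n : ℕ}

theorem vandermondePolynomial_eq_sum :
    vandermondePolynomial R n = ∑ τ : Equiv.Perm (Fin n),
      monomial ((staircase n).equivMapDomain τ) ((Equiv.Perm.sign τ : ℤ) : R) := by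
  rw [vandermondePolynomial, Matrix.det_apply']
  refine Finset.sum_congr rfl fun τ _ => ?_
  have hprod : ∏ i, (X (τ i) : MvPolynomial (Fin n) R) ^ (i : ℕ) =
      monomial ((staircase n).equivMapDomain τ) 1 := by
    rw [monomial_eq, C_1, one_mul, Finsupp.prod_fintype _ _ fun _ => pow_zero _]
    exact Fintype.prod_equiv τ _ _ fun i => by simp
  simp only [Matrix.vandermonde_apply, hprod]
  rw [← map_intCast (C : R →+* MvPolynomial (Fin n) R), C_mul_monomial, mul_one]

theorem exists_eq_equivMapDomain_of_mem_support_vandermondePolynomial {d : Fin n →₀ ℕ}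
    (hd : d ∈ (vandermondePolynomial R n).support) :
    ∃ τ : Equiv.Perm (Fin n), d = (staircase n).equivMapDomain τ := by
  classical
  rw [vandermondePolynomial_eq_sum] at hd
  obtain ⟨τ, -, hτ⟩ := Finset.mem_biUnion.1 (support_sum hd)
  exact ⟨τ, Finset.mem_singleton.1 (support_monomial_subset hτ)⟩

theorem lt_of_mem_support_vandermondePolynomial {d : Fin n →₀ ℕ}
    (hd : d ∈ (vandermondePolynomial R n).support) (i : Fin n) : d i < n := by
  obtain ⟨τ, rfl⟩ := exists_eq_equivMapDomain_of_mem_support_vandermondePolynomial hd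
  exact (τ.symm i).2

theorem isHomogeneous_vandermondePolynomial :
    (vandermondePolynomial R n).IsHomogeneous (staircase n).degree := by
  rw [vandermondePolynomial_eq_sum]
  refine IsHomogeneous.sum _ _ _ fun τ _ => isHomogeneous_monomial _ ?_
  rw [Finsupp.equivMapDomain_eq_mapDomain, Finsupp.degree_mapDomain]

theorem coeff_staircase_vandermondePolynomial :
    coeff (staircase n) (vandermondePolynomial R n) = 1 := by
  classical
  rw [vandermondePolynomial_eq_sum, coeff_sum, Finset.sum_eq_single 1]
  · simp [Equiv.Perm.one_def]
  · intro τ _ hτ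
    rw [coeff_monomial, if_neg]
    contrapose! hτ
    ext i
    simpa using (DFunLike.congr_fun hτ (τ i)).symm
  · simp

theorem eval_vandermondePolynomial_ne_zero_iff [IsDomain R] {x : Fin n → R} :
    eval x (vandermondePolynomial R n) ≠ 0 ↔ Function.Injective x := by
  have hmap : (eval x).mapMatrix (Matrix.vandermonde X) = Matrix.vandermonde x := by
    ext i j
    simp [Matrix.vandermonde_apply]
  rw [vandermondePolynomial, RingHom.map_det, hmap, Matrix.det_vandermonde_ne_zero_iff]

end Vandermonde

section Characteristic

open Nat

/-- The characteristic of `R` if positive and `+∞` otherwise, as an extended integer; the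
extension of `fieldCharZ` to rings. -/
noncomputable def ringCharTop (R : Type*) [NonAssocSemiring R] : WithTop ℤ :=
  if ringChar R = 0 then ⊤ else (ringChar R : WithTop ℤ)

theorem natCast_factorial_ne_zero {R : Type*} [NonAssocSemiring R] [NoZeroDivisors R]
    [Nontrivial R] {N : ℕ} (hN : ((N : ℤ) : WithTop ℤ) < ringCharTop R) : (N ! : R) ≠ 0 := by
  rw [Ne, CharP.cast_eq_zero_iff R (ringChar R)]
  rcases CharP.char_is_prime_or_zero R (ringChar R) with hp | hp
  · rw [ringCharTop, if_neg hp.ne_zero] at hN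
    rw [hp.dvd_factorial, not_le]
    exact_mod_cast hN
  · rw [hp, zero_dvd_iff]
    exact N.factorial_ne_zero

theorem multinomial_dvd_factorial_degree {σ : Type*} (m : σ →₀ ℕ) :
    m.multinomial ∣ m.degree ! :=
  Dvd.intro_left _ (Nat.multinomial_spec m.support m)

end Characteristic

section Digits

theorem sum_ite_lt_sub_one {n q r : ℕ} (h : 0 < q ∨ n ≤ r) :
    ((∑ i : Fin n, if (i : ℕ) < r then q else q - 1 : ℕ) : ℤ) =
      (n : ℤ) * ((q : ℤ) - 1) + min (n : ℤ) (r : ℤ) := by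
  rw [Fin.sum_univ_eq_sum_range fun i => if i < r then q else q - 1]
  induction n with
  | zero => simp
  | succ n ih =>
    rw [Finset.sum_range_succ, Nat.cast_add, ih (by omega), Nat.cast_succ, add_one_mul]
    split_ifs <;> omega

theorem exists_degree_eq_and_mul_add_lt {n k q r t : ℕ} (hnk : n ≤ k)
    (ht : (t : ℤ) ≤ (n : ℤ) * ((q : ℤ) - 1) + min (n : ℤ) (r : ℤ)) :
    ∃ m : Fin n →₀ ℕ, m.degree = t ∧ ∀ i, k * m i + i < k * q + r := by
  have hq : 0 < q ∨ n ≤ r := by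
    by_contra! hq
    obtain ⟨hq, hr⟩ := hq
    obtain rfl : q = 0 := by omega
    simp only [Nat.cast_zero] at ht
    omega
  -- For `r ≤ k` these are the largest admissible exponents.
  let M : Fin n →₀ ℕ :=
    Finsupp.equivFunOnFinite.symm fun i => if (i : ℕ) < r then q else q - 1
  have hM : t ≤ M.degree := by
    rw [← sum_ite_lt_sub_one hq] at ht
    rw [Finsupp.degree_eq_sum]
    exact_mod_cast ht
  have hMlt (i : Fin n) : k * M i + i < k * q + r := by
    change k * (if (i : ℕ) < r then q else q - 1) + i < k * q + r
    split_ifs with hi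
    · omega
    · obtain ⟨q, rfl⟩ : ∃ q', q = q' + 1 := ⟨q - 1, by omega⟩
      rw [Nat.add_sub_cancel, mul_add]
      omega
  obtain ⟨m, hm, hdeg⟩ := Finsupp.exists_le_degree_eq M t hM
  refine ⟨m, hdeg, fun i => lt_of_le_of_lt ?_ (hMlt i)⟩
  gcongr
  exact hm i

end Digits

section RestrictedValueSet

open MvPolynomial

/-- The values of `f` at the points of `∏ i, A i` with pairwise distinct coordinates. -/
def restrictedValueSet {σ R : Type*} [CommSemiring R] (f : MvPolynomial σ R)
    (A : σ → Finset R) : Set R :=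
  {y | ∃ x : σ → R, (∀ i, x i ∈ A i) ∧ Function.Injective x ∧ eval x f = y}

theorem finite_restrictedValueSet {σ R : Type*} [Finite σ] [CommSemiring R]
    (f : MvPolynomial σ R) (A : σ → Finset R) : (restrictedValueSet f A).Finite := by
  refine ((Set.Finite.pi' fun i => (A i).finite_toSet).image fun x => eval x f).subset ?_
  rintro y ⟨x, hxA, -, rfl⟩
  exact ⟨x, hxA, rfl⟩

theorem isHomogeneous_sum_C_mul_X_pow {σ R : Type*} [Fintype σ] [CommSemiring R] (a : σ → R)
    (k : ℕ) : (∑ i, C (a i) * X i ^ k).IsHomogeneous k :=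
  IsHomogeneous.sum _ _ _ fun i _ => isHomogeneous_C_mul_X_pow (a i) i k

theorem exists_injective_eval_notMem {R : Type*} [CommRing R] [IsDomain R] {n k : ℕ}
    (hnk : n ≤ k) {a : Fin n → R} (ha : ∀ i, a i ≠ 0) {g : MvPolynomial (Fin n) R}
    (hg : g.totalDegree < k) (A : Fin n → Finset R) {m : Fin n →₀ ℕ}
    (hmA : ∀ i, k * m i + i < (A i).card) (hm : (m.multinomial : R) ≠ 0) {S : Finset R}
    (hS : S.card = m.degree) :
    ∃ x : Fin n → R, (∀ i, x i ∈ A i) ∧ Function.Injective x ∧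
      eval x ((∑ i, C (a i) * X i ^ k) + g) ∉ S := by
  have hk : 0 < k := Nat.zero_lt_of_lt hg
  have hdiag : (∑ i, C (a i) * X i ^ k).IsHomogeneous k := isHomogeneous_sum_C_mul_X_pow a k
  have hf : ((∑ i, C (a i) * X i ^ k) + g).totalDegree ≤ k :=
    (totalDegree_add _ _).trans (max_le hdiag.totalDegree_le hg.le)
  have hlead : homogeneousComponent k ((∑ i, C (a i) * X i ^ k) + g) =
      ∑ i, C (a i) * X i ^ k := by
    rw [map_add, homogeneousComponent_eq_self hdiag, homogeneousComponent_eq_zero k g hg, add_zero]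
  have hV := isHomogeneous_vandermondePolynomial (R := R) (n := n)
  have htdeg : (k • m + staircase n).degree = S.card * k + (staircase n).degree := by
    rw [map_add, map_nsmul, smul_eq_mul, hS, mul_comm]
  have hcoeff : coeff (k • m + staircase n)
      ((∑ i, C (a i) * X i ^ k) ^ m.degree * vandermondePolynomial R n) ≠ 0 := by
    rw [coeff_sum_C_mul_X_pow_pow_mul hk.ne' a
      (fun d hd i => (lt_of_mem_support_vandermondePolynomial hd i).trans_le hnk) m
      (fun i => i.2.trans_le hnk), coeff_staircase_vandermondePolynomial, mul_one]
    exact mul_ne_zero hm (Finset.prod_ne_zero_iff.2 fun i _ => pow_ne_zero _ (ha i))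
  obtain ⟨x, hxA, hxV, hxS⟩ := exists_eval_ne_zero_and_eval_notMem hk hf hV.totalDegree_le S A
    htdeg (fun i => by simpa using hmA i)
    (by rwa [hlead, homogeneousComponent_eq_self hV, hS])
  exact ⟨x, hxA, eval_vandermondePolynomial_ne_zero_iff.1 hxV, hxS⟩

end RestrictedValueSet

theorem stmt6_general {R : Type*} [CommRing R] [IsDomain R] {n k : ℕ} (hnk : n ≤ k)
    {a : Fin n → R} (ha : ∀ i, a i ≠ 0) {g f : MvPolynomial (Fin n) R} (hg : g.totalDegree < k)
    (hf : f = (∑ i, MvPolynomial.C (a i) * MvPolynomial.X i ^ k) + g)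
    (A : Fin n → Finset R) {q r : ℕ} (hA : ∀ i, k * q + r ≤ (A i).card) :
    min (ringCharTop R) (((n : ℤ) * ((q : ℤ) - 1) + min (n : ℤ) (r : ℤ) + 1 : ℤ) : WithTop ℤ)
      ≤ (((restrictedValueSet f A).ncard : ℤ) : WithTop ℤ) := by
  by_contra! hlt
  obtain ⟨hchar, hsum⟩ := lt_min_iff.1 hlt
  have hfin := finite_restrictedValueSet f A
  obtain ⟨m, hdeg, hm⟩ := exists_degree_eq_and_mul_add_lt hnk
    (Int.lt_add_one_iff.1 (WithTop.coe_lt_coe.1 hsum))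
  have hmult : (m.multinomial : R) ≠ 0 := fun h =>
    natCast_factorial_ne_zero (hdeg ▸ hchar)
      (zero_dvd_iff.1 (h ▸ Nat.cast_dvd_cast (multinomial_dvd_factorial_degree m)))
  have hcard : hfin.toFinset.card = m.degree :=
    hdeg ▸ (Set.ncard_eq_toFinset_card _ hfin).symm
  obtain ⟨x, hxA, hx, hxT⟩ := exists_injective_eval_notMem hnk ha hg A
    (fun i => (hm i).trans_le (hA i)) hmult hcard
  exact hxT (hfin.mem_toFinset.2 ⟨x, hxA, hx, by rw [hf]⟩)

theorem stmt6 {F : Type*} [Field F] (n k : ℕ) (hk : 0 < k) (hnk : n ≤ k)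
    (a : Fin n → F) (ha : ∀ i, a i ≠ 0)
    (g f : MvPolynomial (Fin n) F) (hg : g.totalDegree < k)
    (hf : f = (∑ i, MvPolynomial.C (a i) * MvPolynomial.X i ^ k) + g)
    (A : Finset F) (q r : ℕ) (hr : r < k) (hA : A.card = k * q + r) :
    min (fieldCharZ F) (((n : ℤ) * ((q : ℤ) - 1) + min (n : ℤ) (r : ℤ) + 1 : ℤ) : WithTop ℤ)
      ≤ ((({y | ∃ x : Fin n → F, (∀ i, x i ∈ A) ∧ Function.Injective x ∧
            MvPolynomial.eval x f = y} : Set F).ncard : ℤ) : WithTop ℤ) :=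
  stmt6_general hnk ha hg hf (fun _ => A) fun _ => hA.ge
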